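/- A full-support stochastic choice correspondence μ has an Independent Choice representation if and only if it has both a Logit representation and a Random Categorization representation. -/

import Mathlib

open Finset

variable {X : Type*} [Fintype X] [DecidableEq X]

def IsSCC (μ : Finset X → Finset X → ℝ) : Prop :=
  (∀ T S : Finset X, T ⊆ S → 0 ≤ μ T S ∧ μ T S ≤ 1) ∧
  (∀ S : Finset X, S.Nonempty →
      ∑ T ∈ S.powerset.filter (fun T => T.Nonempty), μ T S = 1) ∧
  (∀ T S : Finset X, ¬ T ⊆ S → μ T S = 0)

def FullSupport (μ : Finset X → Finset X → ℝ) : Prop :=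
  ∀ T S : Finset X, T.Nonempty → T ⊆ S → 0 < μ T S

def LogitRep (μ : Finset X → Finset X → ℝ) : Prop :=
  ∃ π : Finset X → ℝ,
    (∀ T : Finset X, T.Nonempty → 0 < π T) ∧
    ∀ T S : Finset X, T.Nonempty → T ⊆ S →
      μ T S = π T / ∑ T' ∈ S.powerset.filter (fun T' => T'.Nonempty), π T'

noncomputable def rcgVal (m : Finset X → ℝ) (T S : Finset X) : ℝ :=
  (∑ C : Finset X, if T = C ∩ S then m C else 0) /
    ∑ C ∈ Finset.univ.filter (fun C : Finset X => (C ∩ S).Nonempty), m C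

def RCGRep (μ : Finset X → Finset X → ℝ) : Prop :=
  ∃ m : Finset X → ℝ,
    (∀ C, 0 ≤ m C) ∧ m ∅ = 0 ∧ (∑ C : Finset X, m C = 1) ∧
    (∀ x : X, ∃ C : Finset X, x ∈ C ∧ 0 < m C) ∧
    ∀ T S : Finset X, T.Nonempty → T ⊆ S → μ T S = rcgVal m T S

def ICRep (μ : Finset X → Finset X → ℝ) : Prop :=
  ∃ γ : X → ℝ,
    (∀ x, 0 < γ x ∧ γ x < 1) ∧
    ∀ T S : Finset X, T.Nonempty → T ⊆ S →
      μ T S = ((∏ x ∈ T, γ x) * ∏ y ∈ S \ T, (1 - γ y))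
        / (1 - ∏ z ∈ S, (1 - γ z))

/-!
On a fixed menu `S`, random categorization with category weights `m` is a logit rule whose weights
are the marginals `∑_{C ∩ S = T} m C`, and two logit rules on `S` agree exactly when their weights
are proportional. Independent choice is the logit rule with product weights `∏_{x ∈ T} r x`, where
`r x = γ x / (1 - γ x)` are the odds, and the marginals of product weights on `S` are the product
weights times `∏_{x ∉ S} (1 + r x)`. So independent choice is both logit and random categorization.

Conversely, suppose the logit rule of `π` is a random categorization with weights `m`. The menu of
all alternatives shows that `m` is proportional to `π`, and the menu omitting only `x` then shows
that `π T + π (T ∪ {x})` is proportional to `π T`. Hence adjoining `x` multiplies `π` by a constant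
factor, and `π` is a product up to scale.
-/

/-- The probability of choosing `T` from the menu `S` in the logit rule with weights `w`. -/
noncomputable def logitVal {α : Type*} (w : Finset α → ℝ) (T S : Finset α) : ℝ :=
  w T / ∑ T' ∈ S.powerset.filter (fun T' => T'.Nonempty), w T'

/-- The total weight of the categories whose restriction to the menu `S` is `T`. -/
def marginalWeight (m : Finset X → ℝ) (S T : Finset X) : ℝ :=
  ∑ C with C ∩ S = T, m C

section Logit

variable {α : Type*} {w w' : Finset α → ℝ} {S T : Finset α}

lemma logitVal_congr_of_proportional {c : ℝ} (hc : c ≠ 0)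
    (h : ∀ T, T.Nonempty → T ⊆ S → w' T = c * w T) (hT : T.Nonempty) (hTS : T ⊆ S) :
    logitVal w' T S = logitVal w T S := by
  have hsum : ∑ T' ∈ S.powerset.filter (fun T' => T'.Nonempty), w' T' =
      c * ∑ T' ∈ S.powerset.filter (fun T' => T'.Nonempty), w T' := by
    rw [mul_sum]
    refine sum_congr rfl fun T' hT' => ?_
    rw [mem_filter, mem_powerset] at hT'
    exact h T' hT'.2 hT'.1
  rw [logitVal, logitVal, hsum, h T hT hTS, mul_div_mul_left _ _ hc]

lemma sum_nonempty_powerset_pos (hw : ∀ T, T.Nonempty → T ⊆ S → 0 < w T) (hS : S.Nonempty) :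
    0 < ∑ T ∈ S.powerset.filter (fun T => T.Nonempty), w T := by
  refine sum_pos (fun T hT => ?_) ⟨S, by simpa using hS⟩
  rw [mem_filter, mem_powerset] at hT
  exact hw T hT.2 hT.1

lemma exists_proportional_of_logitVal_eq (hw : ∀ T, T.Nonempty → T ⊆ S → 0 < w T)
    (h : ∀ T, T.Nonempty → T ⊆ S → logitVal w' T S = logitVal w T S) :
    ∃ c ≠ 0, ∀ T, T.Nonempty → T ⊆ S → w' T = c * w T := by
  obtain rfl | hS := S.eq_empty_or_nonempty
  · exact ⟨1, one_ne_zero, fun T hT hTS => absurd (subset_empty.mp hTS) hT.ne_empty⟩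
  set W := ∑ T ∈ S.powerset.filter (fun T => T.Nonempty), w T
  set W' := ∑ T ∈ S.powerset.filter (fun T => T.Nonempty), w' T
  have hWpos : 0 < W := sum_nonempty_powerset_pos hw hS
  have hratio (T : Finset α) (hT : T.Nonempty) (hTS : T ⊆ S) : w' T / W' = w T / W := h T hT hTS
  have hW'ne : W' ≠ 0 := by
    intro hzero
    have hSratio := hratio S hS Subset.rfl
    rw [hzero, div_zero] at hSratio
    exact (div_pos (hw S hS Subset.rfl) hWpos).ne hSratio
  refine ⟨W' / W, div_ne_zero hW'ne hWpos.ne', fun T hT hTS => ?_⟩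
  rw [(div_eq_iff hW'ne).mp (hratio T hT hTS)]
  ring

end Logit

section Product

lemma sum_nonempty_powerset_prod {α R : Type*} [CommRing R] (r : α → R) (S : Finset α) :
    ∑ T ∈ S.powerset.filter (fun T => T.Nonempty), ∏ x ∈ T, r x = ∏ x ∈ S, (1 + r x) - 1 := by
  classical
  have hempty : S.powerset.filter (fun T => ¬ T.Nonempty) = {∅} := by
    ext T
    simp +contextual [not_nonempty_iff_eq_empty]
  rw [prod_one_add, ← sum_filter_add_sum_filter_not S.powerset (fun T => T.Nonempty), hempty]
  simp

variable {α : Type*} [DecidableEq α]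

-- `hodds` is `r = γ / (1 - γ)` together with `γ ≠ 1`.
lemma icVal_eq_logitVal_prod {γ r : α → ℝ} {S T : Finset α}
    (hodds : ∀ x ∈ S, (1 + r x) * (1 - γ x) = 1) (hTS : T ⊆ S) :
    ((∏ x ∈ T, γ x) * ∏ y ∈ S \ T, (1 - γ y)) / (1 - ∏ z ∈ S, (1 - γ z)) =
      logitVal (fun T => ∏ x ∈ T, r x) T S := by
  have hcompl : (∏ x ∈ S, (1 + r x)) * ∏ x ∈ S, (1 - γ x) = 1 := by
    rw [← prod_mul_distrib, prod_eq_one hodds]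
  have hnum : (∏ x ∈ T, γ x) * ∏ y ∈ S \ T, (1 - γ y) =
      (∏ x ∈ T, r x) * ∏ x ∈ S, (1 - γ x) := by
    have hγ : ∏ x ∈ T, γ x = (∏ x ∈ T, r x) * ∏ x ∈ T, (1 - γ x) := by
      rw [← prod_mul_distrib]
      exact prod_congr rfl fun x hx => by linear_combination -hodds x (hTS hx)
    rw [hγ, ← prod_sdiff hTS]
    ring
  have hden : 1 - ∏ x ∈ S, (1 - γ x) =
      (∏ x ∈ S, (1 + r x) - 1) * ∏ x ∈ S, (1 - γ x) := by
    linear_combination -hcompl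
  rw [logitVal, sum_nonempty_powerset_prod, hnum, hden,
    mul_div_mul_right _ _ (right_ne_zero_of_mul_eq_one hcompl)]

lemma icRep_iff_exists_logitVal_prod (μ : Finset α → Finset α → ℝ) :
    ICRep μ ↔ ∃ r : α → ℝ, (∀ x, 0 < r x) ∧
      ∀ T S, T.Nonempty → T ⊆ S → μ T S = logitVal (fun T => ∏ x ∈ T, r x) T S := by
  constructor
  · rintro ⟨γ, hγ, hμ⟩
    have hpos (x : α) : 0 < 1 - γ x := sub_pos.mpr (hγ x).2
    refine ⟨fun x => γ x / (1 - γ x), fun x => div_pos (hγ x).1 (hpos x), fun T S hT hTS => ?_⟩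
    rw [hμ T S hT hTS]
    refine icVal_eq_logitVal_prod (fun x _ => ?_) hTS
    have := (hpos x).ne'
    field_simp
    ring
  · rintro ⟨r, hr, hμ⟩
    have hpos (x : α) : 0 < 1 + r x := add_pos one_pos (hr x)
    refine ⟨fun x => r x / (1 + r x), fun x => ⟨div_pos (hr x) (hpos x), ?_⟩,
      fun T S hT hTS => ?_⟩
    · rw [div_lt_one (hpos x)]
      exact lt_one_add (r x)
    · rw [hμ T S hT hTS]
      refine (icVal_eq_logitVal_prod (fun x _ => ?_) hTS).symm
      have := (hpos x).ne'
      field_simp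
      ring

lemma exists_const_mul_prod_of_insert {π : Finset α → ℝ} (hπ : ∀ T, T.Nonempty → 0 < π T)
    (hinsert : ∀ x, ∃ a, ∀ T, T.Nonempty → x ∉ T → π (insert x T) = a * π T) :
    ∃ c > 0, ∃ r : α → ℝ, (∀ x, 0 < r x) ∧ ∀ T, T.Nonempty → π T = c * ∏ x ∈ T, r x := by
  obtain hsub | hnontriv := subsingleton_or_nontrivial α
  · refine ⟨1, one_pos, fun x => π {x}, fun x => hπ _ (singleton_nonempty x), ?_⟩
    rintro T ⟨x, hx⟩
    have hT : T = {x} := eq_singleton_iff_unique_mem.mpr ⟨hx, fun y _ => Subsingleton.elim y x⟩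
    rw [hT, prod_singleton, one_mul]
  choose a ha using hinsert
  have hpair {x y : α} (hxy : x ≠ y) : π {x, y} = a x * π {y} :=
    ha x {y} (singleton_nonempty y) (by simpa using hxy)
  have hapos (x : α) : 0 < a x := by
    obtain ⟨y, hy⟩ := exists_ne x
    have hxy : 0 < a x * π {y} := hpair hy.symm ▸ hπ _ (insert_nonempty x {y})
    exact pos_of_mul_pos_left hxy (hπ _ (singleton_nonempty y)).le
  obtain ⟨x₀⟩ : Nonempty α := inferInstance
  have hsingleton (x : α) : π {x} = π {x₀} / a x₀ * a x := by
    have hcross : a x₀ * π {x} = a x * π {x₀} := by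
      obtain rfl | hne := eq_or_ne x x₀
      · rfl
      · rw [← hpair hne, ← hpair hne.symm, pair_comm]
    have := (hapos x₀).ne'
    field_simp
    linear_combination hcross
  refine ⟨π {x₀} / a x₀, div_pos (hπ _ (singleton_nonempty x₀)) (hapos x₀), a, hapos, ?_⟩
  intro T hT
  induction hT using Finset.Nonempty.cons_induction with
  | singleton x => rw [prod_singleton, hsingleton]
  | cons x T hx hT ih =>
    rw [cons_eq_insert, ha x T hT hx, ih, prod_insert hx]
    ring

end Product

section Categorization

variable {m w : Finset X → ℝ} {S T : Finset X}

lemma rcgVal_eq_logitVal_marginalWeight (m : Finset X → ℝ) (T S : Finset X) :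
    rcgVal m T S = logitVal (marginalWeight m S) T S := by
  have hnum : (∑ C : Finset X, if T = C ∩ S then m C else 0) = marginalWeight m S T := by
    simp only [marginalWeight, sum_filter, eq_comm]
  have hden : ∑ C with (C ∩ S).Nonempty, m C =
      ∑ T' ∈ S.powerset.filter (fun T' => T'.Nonempty), marginalWeight m S T' := by
    have hmaps : ∀ C ∈ univ.filter (fun C : Finset X => (C ∩ S).Nonempty),
        C ∩ S ∈ S.powerset.filter (fun T' => T'.Nonempty) := fun C hC =>
      mem_filter.mpr ⟨mem_powerset.mpr inter_subset_right, (mem_filter.mp hC).2⟩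
    rw [← sum_fiberwise_of_maps_to hmaps]
    refine sum_congr rfl fun T' hT' => ?_
    rw [marginalWeight, filter_filter]
    refine sum_congr (filter_congr fun C _ => and_iff_right_of_imp ?_) fun _ _ => rfl
    rintro rfl
    exact (mem_filter.mp hT').2
  rw [rcgVal, logitVal, hnum, hden]

lemma marginalWeight_eq_mul_of_proportional {c : ℝ} (h : ∀ C, C.Nonempty → w C = c * m C)
    (S : Finset X) (hT : T.Nonempty) : marginalWeight w S T = c * marginalWeight m S T := by
  rw [marginalWeight, marginalWeight, mul_sum]
  refine sum_congr rfl fun C hC => h C ?_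
  rw [← (mem_filter.mp hC).2] at hT
  exact hT.mono inter_subset_left

lemma rcgVal_congr_of_proportional {c : ℝ} (hc : c ≠ 0) (h : ∀ C, C.Nonempty → w C = c * m C)
    (hT : T.Nonempty) (hTS : T ⊆ S) : rcgVal w T S = rcgVal m T S := by
  rw [rcgVal_eq_logitVal_marginalWeight, rcgVal_eq_logitVal_marginalWeight]
  exact logitVal_congr_of_proportional hc
    (fun _ hT' _ => marginalWeight_eq_mul_of_proportional h S hT') hT hTS

lemma marginalWeight_eq_sum_powerset_compl (m : Finset X → ℝ) (hTS : T ⊆ S) :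
    marginalWeight m S T = ∑ D ∈ Sᶜ.powerset, m (T ∪ D) := by
  symm
  refine sum_nbij' (fun D => T ∪ D) (fun C => C \ S) ?_ ?_ ?_ ?_ fun _ _ => rfl
  · intro D hD
    have hDS : D ∩ S = ∅ := disjoint_iff_inter_eq_empty.mp
      (subset_compl_iff_disjoint_right.mp (mem_powerset.mp hD))
    simp [union_inter_distrib_right, inter_eq_left.mpr hTS, hDS]
  · intro C _
    simp [subset_compl_iff_disjoint_right, sdiff_disjoint]
  · intro D hD
    have hDS : Disjoint D S := subset_compl_iff_disjoint_right.mp (mem_powerset.mp hD)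
    simp [union_sdiff_distrib, sdiff_eq_empty_iff_subset.mpr hTS, sdiff_eq_self_of_disjoint hDS]
  · intro C hC
    rw [← (mem_filter.mp hC).2, union_comm, sdiff_union_inter]

lemma marginalWeight_univ (m : Finset X → ℝ) (T : Finset X) : marginalWeight m univ T = m T := by
  simp [marginalWeight_eq_sum_powerset_compl m (subset_univ T)]

lemma marginalWeight_compl_singleton (m : Finset X → ℝ) {x : X} (hx : x ∉ T) :
    marginalWeight m {x}ᶜ T = m T + m (insert x T) := by
  rw [marginalWeight_eq_sum_powerset_compl m (by simpa using hx), compl_compl, ← insert_empty_eq,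
    sum_powerset_insert (notMem_empty x)]
  simp [union_comm T]

lemma marginalWeight_prod (r : X → ℝ) (hTS : T ⊆ S) :
    marginalWeight (fun C => ∏ x ∈ C, r x) S T = (∏ x ∈ Sᶜ, (1 + r x)) * ∏ x ∈ T, r x := by
  rw [marginalWeight_eq_sum_powerset_compl _ hTS, prod_one_add, sum_mul]
  refine sum_congr rfl fun D hD => ?_
  have hTD : Disjoint T D :=
    (subset_compl_iff_disjoint_left.mp (mem_powerset.mp hD)).mono_left hTS
  rw [prod_union hTD, mul_comm]

lemma rcgVal_prod_eq_logitVal_prod {r : X → ℝ} (hr : ∀ x ∈ Sᶜ, 1 + r x ≠ 0) (hT : T.Nonempty)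
    (hTS : T ⊆ S) :
    rcgVal (fun C => ∏ x ∈ C, r x) T S = logitVal (fun C => ∏ x ∈ C, r x) T S := by
  rw [rcgVal_eq_logitVal_marginalWeight]
  exact logitVal_congr_of_proportional (prod_ne_zero_iff.mpr hr)
    (fun _ _ hT'S => marginalWeight_prod r hT'S) hT hTS

lemma RCGRep.of_weights [Nonempty X] {μ : Finset X → Finset X → ℝ}
    (hw : ∀ C, C.Nonempty → 0 ≤ w C) (hcover : ∀ x, ∃ C, x ∈ C ∧ 0 < w C)
    (hμ : ∀ T S, T.Nonempty → T ⊆ S → μ T S = rcgVal w T S) : RCGRep μ := by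
  set Z := ∑ C with C.Nonempty, w C with hZ
  have hZpos : 0 < Z := by
    obtain ⟨C, hxC, hC⟩ := hcover (Classical.arbitrary X)
    exact sum_pos' (fun C hC => hw C (mem_filter.mp hC).2)
      ⟨C, mem_filter.mpr ⟨mem_univ C, _, hxC⟩, hC⟩
  refine ⟨fun C => if C.Nonempty then Z⁻¹ * w C else 0, fun C => ?_, by simp, ?_, fun x => ?_,
    fun T S hT hTS => ?_⟩
  · dsimp only
    split_ifs with hC
    · exact mul_nonneg (inv_nonneg.mpr hZpos.le) (hw C hC)
    · exact le_rfl
  · rw [← sum_filter, ← mul_sum, ← hZ, inv_mul_cancel₀ hZpos.ne']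
  · obtain ⟨C, hxC, hC⟩ := hcover x
    refine ⟨C, hxC, ?_⟩
    exact (mul_pos (inv_pos.mpr hZpos) hC).trans_eq (if_pos ⟨x, hxC⟩).symm
  · rw [hμ T S hT hTS]
    exact (rcgVal_congr_of_proportional (inv_ne_zero hZpos.ne') (fun C hC => if_pos hC)
      hT hTS).symm

end Categorization

section Converse

variable {π m : Finset X → ℝ}

lemma rcgVal_self_eq_logitVal_of_rcgVal_eq (hπ : ∀ T, T.Nonempty → 0 < π T)
    (h : ∀ T S, T.Nonempty → T ⊆ S → rcgVal m T S = logitVal π T S) {T S : Finset X}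
    (hT : T.Nonempty) (hTS : T ⊆ S) : rcgVal π T S = logitVal π T S := by
  obtain ⟨c, hc, hprop⟩ := exists_proportional_of_logitVal_eq (S := univ)
    (w' := marginalWeight m univ) (fun T hT _ => hπ T hT) fun T hT hTS => by
      rw [← rcgVal_eq_logitVal_marginalWeight, h T univ hT hTS]
  have hmπ (C : Finset X) (hC : C.Nonempty) : m C = c * π C := by
    rw [← marginalWeight_univ m C, hprop C hC (subset_univ C)]
  rw [← h T S hT hTS]
  exact (rcgVal_congr_of_proportional hc hmπ hT hTS).symm

lemma exists_insert_factor_of_rcgVal_eq_logitVal (hπ : ∀ T, T.Nonempty → 0 < π T)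
    (h : ∀ T S, T.Nonempty → T ⊆ S → rcgVal π T S = logitVal π T S) (x : X) :
    ∃ a, ∀ T, T.Nonempty → x ∉ T → π (insert x T) = a * π T := by
  obtain ⟨c, -, hprop⟩ := exists_proportional_of_logitVal_eq (S := {x}ᶜ)
    (w' := marginalWeight π {x}ᶜ) (fun T hT _ => hπ T hT) fun T hT hTS => by
      rw [← rcgVal_eq_logitVal_marginalWeight, h T {x}ᶜ hT hTS]
  refine ⟨c - 1, fun T hT hx => ?_⟩
  have hsum : π T + π (insert x T) = c * π T := by
    rw [← marginalWeight_compl_singleton π hx, hprop T hT (by simpa using hx)]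
  linear_combination hsum

end Converse

lemma ICRep.logitRep {α : Type*} [DecidableEq α] {μ : Finset α → Finset α → ℝ} (h : ICRep μ) :
    LogitRep μ := by
  obtain ⟨r, hr, hμ⟩ := (icRep_iff_exists_logitVal_prod μ).mp h
  exact ⟨fun T => ∏ x ∈ T, r x, fun T _ => prod_pos fun x _ => hr x, hμ⟩

lemma ICRep.rcgRep [Nonempty X] {μ : Finset X → Finset X → ℝ} (h : ICRep μ) : RCGRep μ := by
  obtain ⟨r, hr, hμ⟩ := (icRep_iff_exists_logitVal_prod μ).mp h
  have hpos (C : Finset X) : 0 < ∏ x ∈ C, r x := prod_pos fun x _ => hr x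
  refine RCGRep.of_weights (fun C _ => (hpos C).le) (fun x => ⟨{x}, mem_singleton_self x, hpos {x}⟩)
    fun T S hT hTS => ?_
  rw [hμ T S hT hTS]
  exact (rcgVal_prod_eq_logitVal_prod (fun x _ => (add_pos one_pos (hr x)).ne') hT hTS).symm

lemma LogitRep.icRep_of_rcgRep {μ : Finset X → Finset X → ℝ} (hlogit : LogitRep μ)
    (hrcg : RCGRep μ) : ICRep μ := by
  obtain ⟨π, hπ, hμπ⟩ := hlogit
  obtain ⟨m, -, -, -, -, hμm⟩ := hrcg
  have hππ : ∀ T S, T.Nonempty → T ⊆ S → rcgVal π T S = logitVal π T S := fun T S hT hTS =>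
    rcgVal_self_eq_logitVal_of_rcgVal_eq hπ
      (fun T S hT hTS => (hμm T S hT hTS).symm.trans (hμπ T S hT hTS)) hT hTS
  obtain ⟨c, hc, r, hr, hprod⟩ := exists_const_mul_prod_of_insert hπ
    (exists_insert_factor_of_rcgVal_eq_logitVal hπ hππ)
  refine (icRep_iff_exists_logitVal_prod μ).mpr ⟨r, hr, fun T S hT hTS => ?_⟩
  exact (hμπ T S hT hTS).trans
    (logitVal_congr_of_proportional hc.ne' (fun T hT _ => hprod T hT) hT hTS)

theorem ic_iff_logit_and_rcg_general [Nonempty X] (μ : Finset X → Finset X → ℝ) :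
    ICRep μ ↔ LogitRep μ ∧ RCGRep μ :=
  ⟨fun h => ⟨h.logitRep, h.rcgRep⟩, fun h => h.1.icRep_of_rcgRep h.2⟩

theorem ic_iff_logit_and_rcg (μ : Finset X → Finset X → ℝ)
    (hcard : 3 ≤ Fintype.card X) (hμ : IsSCC μ) (hfs : FullSupport μ) :
    ICRep μ ↔ LogitRep μ ∧ RCGRep μ := by
  have : Nonempty X := Fintype.card_pos_iff.mp (by omega)
  exact ic_iff_logit_and_rcg_general μ
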